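/- Full domain and Lipschitz continuity of the resolvent-type operator built from a partial inverse (Lemma B.5). Let f: ℝ^m → ℝ be μ-strongly convex and M-smooth (0 < μ ≤ M < ∞), let r ≥ 0, and define F: ℝ^{r+m} → ℝ by F(w, x) = ½‖w‖² + f(x), so ∇F(w, x) = (w, ∇f(x)). Let Q ∈ ℝ^{(r+m)×(r+m)} be a permutation matrix, H₀ ∈ ℝ^{(r+m)×(r+m)} a skew-symmetric matrix, J ∈ ℝ^{(r+m)×(r+m)} a diagonal matrix with entries in {0,1}, and K = range(J). Let T be the set-valued operator T(w) = { Q u − H₀ w : u ∈ (∇F)_K (Qᵀ w) }, where (∇F)_K is the partial inverse of ∇F with respect to K. Then: (i) T is surjective, i.e., the inverse operator T^{−1} has domain all of ℝ^{r+m}; and (ii) T^{−1} is single-valued, Lipschitz continuous, and monotone. -/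

import Mathlib

open Matrix

/-- The continuous linear map `h ↦ ⟨g, h⟩` on `ℝ^m` (Euclidean inner product). -/
noncomputable def dotCLM {m : ℕ} (g : Fin m → ℝ) : (Fin m → ℝ) →L[ℝ] ℝ :=
  ∑ k, g k • ContinuousLinearMap.proj k

/-- `g` is the (Euclidean) gradient of `f` everywhere. -/
def HasGradient {m : ℕ} (f : (Fin m → ℝ) → ℝ) (g : (Fin m → ℝ) → Fin m → ℝ) : Prop :=
  ∀ x, HasFDerivAt f (dotCLM (g x)) x

/-- `f` is `μ`-strongly convex: `f − (μ/2)‖·‖²` is convex. -/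
def StronglyConvexFun {m : ℕ} (μ : ℝ) (f : (Fin m → ℝ) → ℝ) : Prop :=
  ConvexOn ℝ Set.univ (fun x => f x - μ / 2 * (x ⬝ᵥ x))

/-- The gradient `g` is `M`-Lipschitz (squared Euclidean form). -/
def GradLipschitz {m : ℕ} (M : ℝ) (g : (Fin m → ℝ) → Fin m → ℝ) : Prop :=
  ∀ x z : Fin m → ℝ, (g x - g z) ⬝ᵥ (g x - g z) ≤ M ^ 2 * ((x - z) ⬝ᵥ (x - z))

/-- The gradient of `F(w, x) = ½‖w‖² + f(x)` on `ℝ^{r+m} = ℝ^r × ℝ^m`,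
namely `∇F(w, x) = (w, ∇f(x))`, with `g = ∇f`. -/
def gradF {r m : ℕ} (g : (Fin m → ℝ) → Fin m → ℝ)
    (z : Fin r ⊕ Fin m → ℝ) : Fin r ⊕ Fin m → ℝ :=
  Sum.elim (fun a => z (Sum.inl a)) (fun c => g (fun e => z (Sum.inr e)) c)

/-- The graph of the operator `T(w) = { Q u − H₀ w : u ∈ (∇F)_K (Qᵀ w) }`,
where `K = range J` for a 0/1 diagonal matrix `J` (so `Π_K z = J z` and
`Π_{K⊥} z = (I − J) z`), and `(∇F)_K` is the partial inverse of `∇F` with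
respect to `K`. -/
def TGraph {r m : ℕ} (g : (Fin m → ℝ) → Fin m → ℝ)
    (J : Fin r ⊕ Fin m → ℝ)
    (Q H0 : Matrix (Fin r ⊕ Fin m) (Fin r ⊕ Fin m) ℝ)
    (w b : Fin r ⊕ Fin m → ℝ) : Prop :=
  ∃ x : Fin r ⊕ Fin m → ℝ,
    Q.transpose.mulVec w = (fun l => J l * x l + (1 - J l) * gradF g x l) ∧
    b = Q.mulVec (fun l => J l * gradF g x l + (1 - J l) * x l) - H0.mulVec w

/-!
Strong monotonicity and Lipschitz continuity of `A` together are one condition on the graph of `A`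
that is symmetric in input and output: `c (‖x - y‖² + ‖u - v‖²) ≤ ⟪x - y, u - v⟫`. Exchanging the
`Kᗮ`-components of `x - y` and `u - v` changes neither `‖x - y‖² + ‖u - v‖²` nor `⟪x - y, u - v⟫`,
so the partial inverse satisfies the same inequality; conjugating by an isometry and subtracting a
skew operator only worsens `c`. An operator with this property and full domain is surjective, by
Banach's fixed point theorem for `x ↦ x - c (A x - b)`, and its inverse is then single-valued,
Lipschitz and monotone. Surjectivity is needed twice: on `Kᗮ`, to see that the partial inverse has
full domain, and then for `T` itself.
-/

open scoped SetRel NNReal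

section BistronglyMonotone

variable {E : Type*} [NormedAddCommGroup E] [InnerProductSpace ℝ E] {c : ℝ} {R : SetRel E E}

/-- A set-valued operator, given by its graph `R`, is bistrongly monotone with modulus `c` when
both the operator and its inverse are strongly monotone, in the symmetric form
`c (‖x - y‖² + ‖u - v‖²) ≤ ⟪x - y, u - v⟫`. -/
def BistronglyMonotone (c : ℝ) (R : SetRel E E) : Prop :=
  ∀ ⦃x u y v : E⦄, x ~[R] u → y ~[R] v →
    c * (‖x - y‖ ^ 2 + ‖u - v‖ ^ 2) ≤ inner ℝ (x - y) (u - v)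

/-- The graph of the partial inverse of `R` with respect to `K`, obtained by exchanging the
`Kᗮ`-components of input and output. -/
def partialInverse (K : Submodule ℝ E) [K.HasOrthogonalProjection] (R : SetRel E E) :
    SetRel E E :=
  {(w, z) | ∃ x y, x ~[R] y ∧ w = K.starProjection x + Kᗮ.starProjection y ∧
    z = K.starProjection y + Kᗮ.starProjection x}

/-- The graph of `v ↦ Π_V R(a + v)` on the subspace `V`: the operator `R` restricted to the
affine subspace `a + V` and projected onto its direction. For `V = Kᗮ` and `a = Π_K w`, its
solutions at level `Π_{Kᗮ} w` are the witnesses that `w` lies in the domain of the partial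
inverse. -/
def affineCompression (V : Submodule ℝ E) [V.HasOrthogonalProjection] (a : E) (R : SetRel E E) :
    SetRel V V :=
  {(v, z) | ∃ y, (a + v) ~[R] y ∧ z = V.orthogonalProjectionOnto y}

/-- The graph of the operator `w ↦ Q R(Q⁻¹ w) - H w`, for an isometry `Q`. The operator `T` is the
case where `R` is the partial inverse of `∇F`. -/
def conjSub (Q : E ≃ₗᵢ[ℝ] E) (H : E →L[ℝ] E) (R : SetRel E E) : SetRel E E :=
  {(w, b) | ∃ u, (Q.symm w) ~[R] u ∧ b = Q u - H w}

section Exchange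

variable (K : Submodule ℝ E) [K.HasOrthogonalProjection]

theorem inner_starProjection_add_starProjection_orthogonal (a b a' b' : E) :
    inner ℝ (K.starProjection a + Kᗮ.starProjection b)
        (K.starProjection a' + Kᗮ.starProjection b') =
      inner ℝ (K.starProjection a) (K.starProjection a') +
        inner ℝ (Kᗮ.starProjection b) (Kᗮ.starProjection b') := by
  rw [inner_add_left, inner_add_right, inner_add_right,
    Submodule.inner_right_of_mem_orthogonal (K.starProjection_apply_mem a)
      (Kᗮ.starProjection_apply_mem b'),
    Submodule.inner_left_of_mem_orthogonal (K.starProjection_apply_mem a')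
      (Kᗮ.starProjection_apply_mem b), add_zero, zero_add]

theorem inner_eq_inner_starProjection_add (x y : E) :
    inner ℝ x y = inner ℝ (K.starProjection x) (K.starProjection y) +
      inner ℝ (Kᗮ.starProjection x) (Kᗮ.starProjection y) := by
  rw [← inner_starProjection_add_starProjection_orthogonal,
    K.starProjection_add_starProjection_orthogonal, K.starProjection_add_starProjection_orthogonal]

theorem inner_exchange (x y : E) :
    inner ℝ (K.starProjection x + Kᗮ.starProjection y)
      (K.starProjection y + Kᗮ.starProjection x) = inner ℝ x y := by
  rw [inner_starProjection_add_starProjection_orthogonal, inner_eq_inner_starProjection_add K x y,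
    real_inner_comm (Kᗮ.starProjection x)]

theorem norm_sq_add_norm_sq_exchange (x y : E) :
    ‖K.starProjection x + Kᗮ.starProjection y‖ ^ 2 +
      ‖K.starProjection y + Kᗮ.starProjection x‖ ^ 2 = ‖x‖ ^ 2 + ‖y‖ ^ 2 := by
  simp only [← real_inner_self_eq_norm_sq, inner_starProjection_add_starProjection_orthogonal,
    inner_eq_inner_starProjection_add K x x, inner_eq_inner_starProjection_add K y y]
  ring

end Exchange

namespace BistronglyMonotone

theorem inner_nonneg (hc : 0 ≤ c) (hR : BistronglyMonotone c R) {x u y v : E}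
    (hxu : x ~[R] u) (hyv : y ~[R] v) : 0 ≤ inner ℝ (x - y) (u - v) :=
  (by positivity : 0 ≤ c * (‖x - y‖ ^ 2 + ‖u - v‖ ^ 2)).trans (hR hxu hyv)

protected theorem norm_sub_le (hc : 0 < c) (hR : BistronglyMonotone c R) {x u y v : E}
    (hxu : x ~[R] u) (hyv : y ~[R] v) : ‖x - y‖ ≤ c⁻¹ * ‖u - v‖ := by
  rw [← div_eq_inv_mul, le_div_iff₀' hc]
  have hmono : ‖x - y‖ * (c * ‖x - y‖) ≤ ‖x - y‖ * ‖u - v‖ := by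
    nlinarith [hR hxu hyv, real_inner_le_norm (x - y) (u - v), sq_nonneg ‖u - v‖]
  rcases (norm_nonneg (x - y)).eq_or_lt with h | h
  · simp [← h]
  · exact le_of_mul_le_mul_left hmono h

protected theorem graph {A : E → E} {μ : ℝ} {L : ℝ≥0} (hμ : 0 ≤ μ)
    (hmono : ∀ x y, μ * ‖x - y‖ ^ 2 ≤ inner ℝ (A x - A y) (x - y)) (hlip : LipschitzWith L A) :
    BistronglyMonotone (μ / (1 + L ^ 2)) (Function.graph A) := by
  rintro x _ y _ rfl rfl
  have hA : ‖A x - A y‖ ^ 2 ≤ L ^ 2 * ‖x - y‖ ^ 2 := by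
    rw [← mul_pow]
    exact pow_le_pow_left₀ (norm_nonneg _) (hlip.norm_sub_le x y) 2
  calc μ / (1 + L ^ 2) * (‖x - y‖ ^ 2 + ‖A x - A y‖ ^ 2)
      ≤ μ / (1 + L ^ 2) * ((1 + L ^ 2) * ‖x - y‖ ^ 2) := by gcongr; linarith
    _ = μ * ‖x - y‖ ^ 2 := by field_simp
    _ ≤ inner ℝ (A x - A y) (x - y) := hmono x y
    _ = inner ℝ (x - y) (A x - A y) := real_inner_comm _ _

theorem contractingWith_sub_smul (hc : 0 < c) {A : E → E}
    (hA : BistronglyMonotone c (Function.graph A)) (b : E) :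
    ContractingWith (√(1 - 2 * c ^ 2)).toNNReal fun x => x - c • (A x - b) := by
  refine ⟨?_, LipschitzWith.of_dist_le_mul fun x y => ?_⟩
  · rw [Real.toNNReal_lt_one, Real.sqrt_lt' one_pos]
    nlinarith [pow_pos hc 2]
  have hsq : ‖(x - y) - c • (A x - A y)‖ ^ 2 ≤ (1 - 2 * c ^ 2) * ‖x - y‖ ^ 2 := by
    rw [norm_sub_sq_real, norm_smul, inner_smul_right, mul_pow, Real.norm_eq_abs, sq_abs]
    have hxy : c * (‖x - y‖ ^ 2 + ‖A x - A y‖ ^ 2) ≤ inner ℝ (x - y) (A x - A y) := hA rfl rfl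
    nlinarith [mul_le_mul_of_nonneg_left hxy hc.le,
      mul_nonneg (sq_nonneg c) (sq_nonneg ‖A x - A y‖)]
  calc dist (x - c • (A x - b)) (y - c • (A y - b))
      = ‖(x - y) - c • (A x - A y)‖ := by rw [dist_eq_norm]; congr 1; module
    _ ≤ √((1 - 2 * c ^ 2) * ‖x - y‖ ^ 2) := Real.le_sqrt_of_sq_le hsq
    _ = (√(1 - 2 * c ^ 2)).toNNReal * dist x y := by
      rw [Real.sqrt_mul' _ (sq_nonneg _), Real.sqrt_sq (norm_nonneg _),
        Real.coe_toNNReal _ (Real.sqrt_nonneg _), dist_eq_norm]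

theorem cod_eq_univ [CompleteSpace E] (hc : 0 < c) (hR : BistronglyMonotone c R)
    (hdom : R.dom = Set.univ) : R.cod = Set.univ := by
  refine Set.eq_univ_of_forall fun b => ?_
  choose A hA using Set.eq_univ_iff_forall.mp hdom
  have hgraph : BistronglyMonotone c (Function.graph A) := by
    rintro x _ y _ rfl rfl
    exact hR (hA x) (hA y)
  have hΦ := hgraph.contractingWith_sub_smul hc b
  have hfix : c • (A hΦ.fixedPoint - b) = 0 := sub_eq_self.mp hΦ.fixedPoint_isFixedPt
  have hAb : A hΦ.fixedPoint = b :=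
    sub_eq_zero.mp ((smul_eq_zero.mp hfix).resolve_left hc.ne')
  exact ⟨_, hAb.subst (motive := (hΦ.fixedPoint ~[R] ·)) (hA _)⟩

theorem exists_inv_eq_graph [CompleteSpace E] (hc : 0 < c) (hR : BistronglyMonotone c R)
    (hdom : R.dom = Set.univ) :
    ∃ S : E → E, R.inv = Function.graph S ∧ (∃ κ, LipschitzWith κ S) ∧
      ∀ b b', 0 ≤ inner ℝ (S b - S b') (b - b') := by
  choose S hS using Set.eq_univ_iff_forall.mp (hR.cod_eq_univ hc hdom)
  refine ⟨S, Set.ext fun ⟨b, w⟩ => ⟨fun hw => ?_, ?_⟩, ⟨c⁻¹.toNNReal, ?_⟩,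
    fun b b' => hR.inner_nonneg hc.le (hS b) (hS b')⟩
  · have hle := hR.norm_sub_le hc (hS b) hw
    rw [sub_self, norm_zero, mul_zero] at hle
    exact sub_eq_zero.mp (norm_le_zero_iff.mp hle)
  · rintro rfl
    exact hS b
  · refine LipschitzWith.of_dist_le_mul fun b b' => ?_
    rw [Real.coe_toNNReal _ (inv_nonneg.mpr hc.le), dist_eq_norm, dist_eq_norm]
    exact hR.norm_sub_le hc (hS b) (hS b')

protected theorem affineCompression (hc : 0 ≤ c) (hR : BistronglyMonotone c R) (V : Submodule ℝ E)
    [V.HasOrthogonalProjection] (a : E) : BistronglyMonotone c (affineCompression V a R) := by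
  rintro v _ v' _ ⟨y, hy, rfl⟩ ⟨y', hy', rfl⟩
  have hle := hR hy hy'
  rw [add_sub_add_left_eq_sub] at hle
  calc c * (‖v - v'‖ ^ 2 + ‖V.orthogonalProjectionOnto y - V.orthogonalProjectionOnto y'‖ ^ 2)
      ≤ c * (‖(v - v' : E)‖ ^ 2 + ‖y - y'‖ ^ 2) := by
        rw [← map_sub]
        gcongr
        · rfl
        · exact V.norm_orthogonalProjectionOnto_apply_le _
    _ ≤ inner ℝ (v - v' : E) (y - y') := hle
    _ = inner ℝ (v - v') (V.orthogonalProjectionOnto y - V.orthogonalProjectionOnto y') := by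
        rw [← map_sub, Submodule.inner_orthogonalProjectionOnto_eq_of_mem_left, Submodule.coe_sub]

protected theorem partialInverse (K : Submodule ℝ E) [K.HasOrthogonalProjection]
    (hR : BistronglyMonotone c R) : BistronglyMonotone c (partialInverse K R) := by
  rintro _ _ _ _ ⟨x, u, hxu, rfl, rfl⟩ ⟨y, v, hyv, rfl, rfl⟩
  have hin : K.starProjection x + Kᗮ.starProjection u -
      (K.starProjection y + Kᗮ.starProjection v) =
      K.starProjection (x - y) + Kᗮ.starProjection (u - v) := by simp only [map_sub]; abel
  have hout : K.starProjection u + Kᗮ.starProjection x -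
      (K.starProjection v + Kᗮ.starProjection y) =
      K.starProjection (u - v) + Kᗮ.starProjection (x - y) := by simp only [map_sub]; abel
  rw [hin, hout, norm_sq_add_norm_sq_exchange, inner_exchange]
  exact hR hxu hyv

theorem partialInverse_dom_eq_univ [CompleteSpace E] (hc : 0 < c) (hR : BistronglyMonotone c R)
    (hdom : R.dom = Set.univ) (K : Submodule ℝ E) [K.HasOrthogonalProjection] :
    (partialInverse K R).dom = Set.univ := by
  refine Set.eq_univ_of_forall fun w => ?_
  have hslice : (affineCompression Kᗮ (K.starProjection w) R).dom = Set.univ :=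
    Set.eq_univ_of_forall fun v =>
      have ⟨y, hy⟩ := Set.eq_univ_iff_forall.mp hdom (K.starProjection w + v)
      ⟨_, y, hy, rfl⟩
  obtain ⟨v, y, hy, hwy⟩ := Set.eq_univ_iff_forall.mp
    ((hR.affineCompression hc.le Kᗮ _).cod_eq_univ hc hslice) (Kᗮ.orthogonalProjectionOnto w)
  have hPy : Kᗮ.starProjection y = Kᗮ.starProjection w := congrArg Subtype.val hwy.symm
  refine ⟨_, _, y, hy, ?_, rfl⟩
  rw [map_add, K.starProjection_eq_self_iff.mpr (K.starProjection_apply_mem w),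
    K.starProjection_apply_eq_zero_iff.mpr v.2, add_zero, hPy,
    K.starProjection_add_starProjection_orthogonal]

protected theorem conjSub (hc : 0 ≤ c) (hR : BistronglyMonotone c R) (Q : E ≃ₗᵢ[ℝ] E)
    {H : E →L[ℝ] E} (hH : ∀ v, inner ℝ v (H v) ≤ 0) :
    BistronglyMonotone (c / (2 * (1 + ‖H‖ ^ 2))) (conjSub Q H R) := by
  rintro w _ w' _ ⟨u, hu, rfl⟩ ⟨u', hu', rfl⟩
  set p := w - w'
  set q := u - u'
  have hle : c * (‖p‖ ^ 2 + ‖q‖ ^ 2) ≤ inner ℝ p (Q q) := by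
    rw [← Q.symm.norm_map p, ← Q.symm.inner_map_map p, Q.symm_apply_apply, map_sub]
    exact hR hu hu'
  have hsq : ‖Q q - H p‖ ^ 2 ≤ 2 * (‖q‖ ^ 2 + ‖H‖ ^ 2 * ‖p‖ ^ 2) :=
    calc ‖Q q - H p‖ ^ 2
        ≤ (‖q‖ + ‖H‖ * ‖p‖) ^ 2 := by
          gcongr
          exact (norm_sub_le _ _).trans (add_le_add (Q.norm_map q).le (H.le_opNorm p))
      _ ≤ 2 * (‖q‖ ^ 2 + (‖H‖ * ‖p‖) ^ 2) := add_sq_le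
      _ = 2 * (‖q‖ ^ 2 + ‖H‖ ^ 2 * ‖p‖ ^ 2) := by rw [mul_pow]
  have hout : Q u - H w - (Q u' - H w') = Q q - H p := by simp only [p, q, map_sub]; abel
  rw [hout]
  calc c / (2 * (1 + ‖H‖ ^ 2)) * (‖p‖ ^ 2 + ‖Q q - H p‖ ^ 2)
      ≤ c / (2 * (1 + ‖H‖ ^ 2)) * (2 * (1 + ‖H‖ ^ 2) * (‖p‖ ^ 2 + ‖q‖ ^ 2)) := by
        gcongr
        nlinarith [sq_nonneg ‖p‖, mul_nonneg (sq_nonneg ‖H‖) (sq_nonneg ‖q‖)]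
    _ = c * (‖p‖ ^ 2 + ‖q‖ ^ 2) := by field_simp
    _ ≤ inner ℝ p (Q q) := hle
    _ ≤ inner ℝ p (Q q - H p) := by rw [inner_sub_right]; linarith [hH p]

end BistronglyMonotone

theorem conjSub_dom_eq_univ (Q : E ≃ₗᵢ[ℝ] E) (H : E →L[ℝ] E) (hdom : R.dom = Set.univ) :
    (conjSub Q H R).dom = Set.univ :=
  Set.eq_univ_of_forall fun w =>
    have ⟨u, hu⟩ := Set.eq_univ_iff_forall.mp hdom (Q.symm w)
    ⟨_, u, hu, rfl⟩

end BistronglyMonotone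

theorem partial_inverse_resolvent_full_domain_general {E : Type*}
    [NormedAddCommGroup E] [InnerProductSpace ℝ E] [CompleteSpace E]
    {A : E → E} {μ : ℝ} {L : ℝ≥0} (hμ : 0 < μ)
    (hmono : ∀ x y, μ * ‖x - y‖ ^ 2 ≤ inner ℝ (A x - A y) (x - y)) (hlip : LipschitzWith L A)
    (K : Submodule ℝ E) [K.HasOrthogonalProjection] (Q : E ≃ₗᵢ[ℝ] E) {H : E →L[ℝ] E}
    (hH : ∀ v, inner ℝ v (H v) ≤ 0) :
    ∃ S : E → E, (conjSub Q H (partialInverse K (Function.graph A))).inv = Function.graph S ∧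
      (∃ κ, LipschitzWith κ S) ∧ ∀ b b', 0 ≤ inner ℝ (S b - S b') (b - b') := by
  have hA := BistronglyMonotone.graph hμ.le hmono hlip
  have hdom : (Function.graph A).dom = Set.univ := Set.eq_univ_of_forall fun x => ⟨A x, rfl⟩
  have hc : 0 < μ / (1 + L ^ 2) := by positivity
  exact ((hA.partialInverse K).conjSub hc.le Q hH).exists_inv_eq_graph (by positivity)
    (conjSub_dom_eq_univ Q H (hA.partialInverse_dom_eq_univ hc hdom K))

theorem fderiv_sub_apply_sub_nonneg_of_convexOn {E : Type*} [NormedAddCommGroup E]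
    [NormedSpace ℝ E] {s : Set E} {h : E → ℝ} {x y : E} {hx' hy' : E →L[ℝ] ℝ}
    (hconv : ConvexOn ℝ s h) (hxs : x ∈ s) (hys : y ∈ s)
    (hx : HasFDerivAt h hx' x) (hy : HasFDerivAt h hy' y) : 0 ≤ (hx' - hy') (x - y) := by
  have hline := hconv.comp_affineMap (AffineMap.lineMap y x : ℝ →ᵃ[ℝ] E)
  have hdy : HasDerivAt (h ∘ AffineMap.lineMap y x) (hy' (x - y)) (0 : ℝ) :=
    HasFDerivAt.comp_hasDerivAt 0 (by simpa using hy) AffineMap.hasDerivAt_lineMap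
  have hdx : HasDerivAt (h ∘ AffineMap.lineMap y x) (hx' (x - y)) (1 : ℝ) :=
    HasFDerivAt.comp_hasDerivAt 1 (by simpa using hx) AffineMap.hasDerivAt_lineMap
  have h0 : (0 : ℝ) ∈ AffineMap.lineMap y x ⁻¹' s := by simpa using hys
  have h1 : (1 : ℝ) ∈ AffineMap.lineMap y x ⁻¹' s := by simpa using hxs
  exact sub_nonneg.mpr ((hline.le_slope_of_hasDerivAt h0 h1 one_pos hdy).trans
    (hline.slope_le_of_hasDerivAt h0 h1 one_pos hdx))

section Gradient

variable {r m : ℕ} {g : (Fin m → ℝ) → Fin m → ℝ}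

theorem dotCLM_apply (u v : Fin m → ℝ) : dotCLM u v = u ⬝ᵥ v := by
  simp [dotCLM, dotProduct]

theorem hasFDerivAt_dotProduct_self (x : Fin m → ℝ) :
    HasFDerivAt (fun y : Fin m → ℝ => y ⬝ᵥ y) (dotCLM ((2 : ℝ) • x)) x := by
  have hsum := HasFDerivAt.fun_sum (u := Finset.univ) fun i _ =>
    (hasFDerivAt_apply (𝕜 := ℝ) i x).mul (hasFDerivAt_apply i x)
  refine hsum.congr_fderiv (ContinuousLinearMap.ext fun v => ?_)
  simp [dotCLM, two_mul, add_mul]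

theorem HasGradient.strongly_monotone {μ : ℝ} {f : (Fin m → ℝ) → ℝ} (hgrad : HasGradient f g)
    (hsc : StronglyConvexFun μ f) (x y : Fin m → ℝ) :
    μ * ((x - y) ⬝ᵥ (x - y)) ≤ (g x - g y) ⬝ᵥ (x - y) := by
  have hderiv (z : Fin m → ℝ) := (hgrad z).sub ((hasFDerivAt_dotProduct_self z).const_mul (μ / 2))
  have hnonneg := fderiv_sub_apply_sub_nonneg_of_convexOn hsc (Set.mem_univ x) (Set.mem_univ y)
    (hderiv x) (hderiv y)
  simp only [_root_.sub_apply, _root_.smul_apply, dotCLM_apply, smul_dotProduct,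
    smul_eq_mul] at hnonneg
  rw [sub_dotProduct x y, sub_dotProduct (g x)]
  linarith

theorem gradF_sumElim (w : Fin r → ℝ) (x : Fin m → ℝ) :
    gradF g (Sum.elim w x) = Sum.elim w (g x) := rfl

theorem gradF_strongly_monotone {μ : ℝ}
    (hg : ∀ x y, μ * ((x - y) ⬝ᵥ (x - y)) ≤ (g x - g y) ⬝ᵥ (x - y)) (z z' : Fin r ⊕ Fin m → ℝ) :
    min 1 μ * ((z - z') ⬝ᵥ (z - z')) ≤ (gradF g z - gradF g z') ⬝ᵥ (z - z') := by
  rw [← Sum.elim_comp_inl_inr z, ← Sum.elim_comp_inl_inr z']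
  generalize z ∘ Sum.inl = w, z ∘ Sum.inr = x, z' ∘ Sum.inl = w', z' ∘ Sum.inr = x'
  simp only [gradF_sumElim, ← Sum.elim_sub_sub, sumElim_dotProduct_sumElim, mul_add]
  have hw : 0 ≤ (w - w') ⬝ᵥ (w - w') := dotProduct_self_star_nonneg _
  have hx : 0 ≤ (x - x') ⬝ᵥ (x - x') := dotProduct_self_star_nonneg _
  exact add_le_add (mul_le_of_le_one_left hw (min_le_left 1 μ))
    ((mul_le_mul_of_nonneg_right (min_le_right 1 μ) hx).trans (hg x x'))

theorem gradF_lipschitz {M : ℝ} (hg : GradLipschitz M g) (z z' : Fin r ⊕ Fin m → ℝ) :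
    (gradF g z - gradF g z') ⬝ᵥ (gradF g z - gradF g z') ≤
      max 1 |M| ^ 2 * ((z - z') ⬝ᵥ (z - z')) := by
  rw [← Sum.elim_comp_inl_inr z, ← Sum.elim_comp_inl_inr z']
  generalize z ∘ Sum.inl = w, z ∘ Sum.inr = x, z' ∘ Sum.inl = w', z' ∘ Sum.inr = x'
  simp only [gradF_sumElim, ← Sum.elim_sub_sub, sumElim_dotProduct_sumElim, mul_add]
  have hw : 0 ≤ (w - w') ⬝ᵥ (w - w') := dotProduct_self_star_nonneg _
  have hx : 0 ≤ (x - x') ⬝ᵥ (x - x') := dotProduct_self_star_nonneg _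
  have hM : M ^ 2 ≤ max 1 |M| ^ 2 := by
    rw [← sq_abs]
    gcongr
    exact le_max_right 1 |M|
  exact add_le_add (le_mul_of_one_le_left hw (one_le_pow₀ (le_max_left 1 |M|)))
    ((hg x x').trans (mul_le_mul_of_nonneg_right hM hx))

end Gradient

section EuclideanSpace

variable {ι : Type*} [Fintype ι]

theorem inner_toLp_eq_dotProduct (u v : ι → ℝ) :
    inner ℝ (WithLp.toLp 2 u) (WithLp.toLp 2 v) = u ⬝ᵥ v := by
  rw [EuclideanSpace.inner_toLp_toLp, star_trivial, dotProduct_comm]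

theorem norm_toLp_sq (v : ι → ℝ) : ‖WithLp.toLp 2 v‖ ^ 2 = v ⬝ᵥ v := by
  rw [← real_inner_self_eq_norm_sq, inner_toLp_eq_dotProduct]

theorem strongly_monotone_map_toLp {G : (ι → ℝ) → ι → ℝ} {μ : ℝ}
    (hG : ∀ x y, μ * ((x - y) ⬝ᵥ (x - y)) ≤ (G x - G y) ⬝ᵥ (x - y)) (x y : EuclideanSpace ℝ ι) :
    μ * ‖x - y‖ ^ 2 ≤ inner ℝ (WithLp.map 2 G x - WithLp.map 2 G y) (x - y) := by
  have h := hG x.ofLp y.ofLp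
  rwa [← norm_toLp_sq, ← inner_toLp_eq_dotProduct] at h

theorem lipschitzWith_map_toLp {G : (ι → ℝ) → ι → ℝ} {L : ℝ≥0}
    (hG : ∀ x y, (G x - G y) ⬝ᵥ (G x - G y) ≤ L ^ 2 * ((x - y) ⬝ᵥ (x - y))) :
    LipschitzWith L (WithLp.map 2 G : EuclideanSpace ℝ ι → EuclideanSpace ℝ ι) := by
  refine LipschitzWith.of_dist_le_mul fun x y => ?_
  rw [dist_eq_norm, dist_eq_norm]
  refine le_of_sq_le_sq ?_ (by positivity)
  have h := hG x.ofLp y.ofLp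
  rw [← norm_toLp_sq, ← norm_toLp_sq] at h
  rwa [mul_pow]

variable [DecidableEq ι]

theorem starProjection_range_toEuclideanCLM_diagonal {J : ι → ℝ} (hJ : ∀ l, J l = 0 ∨ J l = 1) :
    (toEuclideanCLM (𝕜 := ℝ) (diagonal J)).range.starProjection =
      toEuclideanCLM (𝕜 := ℝ) (diagonal J) := by
  have hidem : ∀ l, J l * J l = J l := fun l => by rcases hJ l with h | h <;> simp [h]
  have hproj : IsStarProjection (diagonal J) :=
    ⟨by simp only [IsIdempotentElem, diagonal_mul_diagonal, hidem], isHermitian_diagonal J⟩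
  obtain ⟨_, h⟩ := isStarProjection_iff_eq_starProjection_range.mp
    (hproj.map (toEuclideanCLM (n := ι) (𝕜 := ℝ)))
  exact h.symm

theorem inner_toEuclideanCLM_self_eq_zero {H : Matrix ι ι ℝ} (hH : H.transpose = -H)
    (v : EuclideanSpace ℝ ι) : inner ℝ v (toEuclideanCLM (𝕜 := ℝ) H v) = 0 := by
  rw [inner_toEuclideanCLM]
  refine self_eq_neg.mp ?_
  calc v.ofLp ⬝ᵥ H *ᵥ v.ofLp = v.ofLp ⬝ᵥ Hᵀ *ᵥ v.ofLp := by
        rw [mulVec_transpose, dotProduct_mulVec, dotProduct_comm]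
    _ = -(v.ofLp ⬝ᵥ H *ᵥ v.ofLp) := by rw [hH, neg_mulVec, dotProduct_neg]

theorem piLpCongrLeft_toLp_eq_permMatrix_mulVec (σ : Equiv.Perm ι) (v : ι → ℝ) :
    LinearIsometryEquiv.piLpCongrLeft 2 ℝ ℝ σ.symm (WithLp.toLp 2 v) =
      WithLp.toLp 2 (σ.permMatrix ℝ *ᵥ v) := by
  rw [permMatrix_mulVec]
  rfl

theorem mem_partialInverse_range_diagonal_iff {J : ι → ℝ} (hJ : ∀ l, J l = 0 ∨ J l = 1)
    {G : (ι → ℝ) → ι → ℝ} {w z : EuclideanSpace ℝ ι} :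
    w ~[partialInverse (toEuclideanCLM (𝕜 := ℝ) (diagonal J)).range
        (Function.graph (WithLp.map 2 G))] z ↔
      ∃ x, w.ofLp = (fun l => J l * x l + (1 - J l) * G x l) ∧
        z.ofLp = fun l => J l * G x l + (1 - J l) * x l := by
  have hexchange (x y : ι → ℝ) (v : EuclideanSpace ℝ ι) :
      v = (toEuclideanCLM (𝕜 := ℝ) (diagonal J)).range.starProjection (WithLp.toLp 2 x) +
          (toEuclideanCLM (𝕜 := ℝ) (diagonal J)).rangeᗮ.starProjection (WithLp.toLp 2 y) ↔
        v.ofLp = fun l => J l * x l + (1 - J l) * y l := by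
    rw [Submodule.starProjection_orthogonal', starProjection_range_toEuclideanCLM_diagonal hJ,
      ← WithLp.ofLp_injective 2 |>.eq_iff, funext_iff, funext_iff]
    simp [mulVec_diagonal, sub_mul]
  constructor
  · rintro ⟨x, _, rfl, hw, hz⟩
    exact ⟨x.ofLp, (hexchange _ _ _).mp hw, (hexchange _ _ _).mp hz⟩
  · rintro ⟨x, hw, hz⟩
    exact ⟨WithLp.toLp 2 x, _, rfl, (hexchange _ _ _).mpr hw, (hexchange _ _ _).mpr hz⟩

end EuclideanSpace

theorem TGraph_permMatrix_iff {r m : ℕ} {g : (Fin m → ℝ) → Fin m → ℝ} {J : Fin r ⊕ Fin m → ℝ}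
    (hJ : ∀ l, J l = 0 ∨ J l = 1) (σ : Equiv.Perm (Fin r ⊕ Fin m))
    (H : Matrix (Fin r ⊕ Fin m) (Fin r ⊕ Fin m) ℝ) (w b : Fin r ⊕ Fin m → ℝ) :
    TGraph g J (σ.permMatrix ℝ) H w b ↔
      (WithLp.toLp 2 w) ~[conjSub (LinearIsometryEquiv.piLpCongrLeft 2 ℝ ℝ σ.symm)
        (toEuclideanCLM (𝕜 := ℝ) H)
        (partialInverse (toEuclideanCLM (𝕜 := ℝ) (diagonal J)).range
          (Function.graph (WithLp.map 2 (gradF g))))] (WithLp.toLp 2 b) := by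
  have hinput : (LinearIsometryEquiv.piLpCongrLeft 2 ℝ ℝ σ.symm).symm (WithLp.toLp 2 w) =
      WithLp.toLp 2 ((σ.permMatrix ℝ)ᵀ *ᵥ w) := by
    rw [transpose_permMatrix, ← piLpCongrLeft_toLp_eq_permMatrix_mulVec,
      LinearIsometryEquiv.piLpCongrLeft_symm]
    rfl
  constructor
  · rintro ⟨x, hw, rfl⟩
    refine ⟨WithLp.toLp 2 _, (mem_partialInverse_range_diagonal_iff hJ).mpr
      ⟨x, by rw [hinput, hw], rfl⟩, ?_⟩
    rw [piLpCongrLeft_toLp_eq_permMatrix_mulVec]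
    rfl
  · rintro ⟨u, hu, hb⟩
    obtain ⟨x, hw, hz⟩ := (mem_partialInverse_range_diagonal_iff hJ).mp hu
    refine ⟨x, by rw [← hw, hinput], ?_⟩
    rw [← hz]
    rw [← WithLp.toLp_ofLp 2 u, piLpCongrLeft_toLp_eq_permMatrix_mulVec] at hb
    exact congrArg WithLp.ofLp hb

/-- **Full domain and Lipschitz continuity of the resolvent-type operator built
from a partial inverse (Lemma B.5).**  With `f` `μ`-strongly convex and
`M`-smooth, `F(w,x) = ½‖w‖² + f(x)`, `Q` a permutation matrix, `H₀`
skew-symmetric, and `K = range J`: the operator `T` is surjective, and `T⁻¹` is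
single-valued, Lipschitz continuous, and monotone. -/
theorem partial_inverse_resolvent_full_domain {r m : ℕ} (μ M : ℝ)
    (hμ : 0 < μ) (hμM : μ ≤ M)
    (f : (Fin m → ℝ) → ℝ) (g : (Fin m → ℝ) → Fin m → ℝ)
    (hgrad : HasGradient f g)
    (hsc : StronglyConvexFun μ f) (hsm : GradLipschitz M g)
    (J : Fin r ⊕ Fin m → ℝ) (hJ : ∀ l, J l = 0 ∨ J l = 1)
    (Q : Matrix (Fin r ⊕ Fin m) (Fin r ⊕ Fin m) ℝ)
    (hQ : ∃ ep : Equiv.Perm (Fin r ⊕ Fin m), ∀ a b, Q a b = if b = ep a then 1 else 0)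
    (H0 : Matrix (Fin r ⊕ Fin m) (Fin r ⊕ Fin m) ℝ) (hH0 : H0.transpose = -H0) :
    -- (i) `T` is surjective, i.e. `dom T⁻¹ = ℝ^{r+m}`
    (∀ b : Fin r ⊕ Fin m → ℝ, ∃ w, TGraph g J Q H0 w b) ∧
    -- (ii) `T⁻¹` is single-valued, Lipschitz continuous, and monotone
    (∀ b w₁ w₂, TGraph g J Q H0 w₁ b → TGraph g J Q H0 w₂ b → w₁ = w₂) ∧
    (∃ κ : ℝ, 0 ≤ κ ∧ ∀ w₁ b₁ w₂ b₂,
      TGraph g J Q H0 w₁ b₁ → TGraph g J Q H0 w₂ b₂ →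
        (w₁ - w₂) ⬝ᵥ (w₁ - w₂) ≤ κ ^ 2 * ((b₁ - b₂) ⬝ᵥ (b₁ - b₂))) ∧
    (∀ w₁ b₁ w₂ b₂,
      TGraph g J Q H0 w₁ b₁ → TGraph g J Q H0 w₂ b₂ →
        0 ≤ (w₁ - w₂) ⬝ᵥ (b₁ - b₂)) := by
  obtain ⟨σ, hσ⟩ := hQ
  obtain rfl : Q = σ.permMatrix ℝ := by
    ext a b
    simp [hσ, PEquiv.toMatrix_apply, eq_comm]
  have hmono := strongly_monotone_map_toLp
    (gradF_strongly_monotone (r := r) (hgrad.strongly_monotone hsc))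
  have hlip := lipschitzWith_map_toLp (L := max 1 ‖M‖₊) (G := gradF (r := r) g)
    (by simpa using gradF_lipschitz hsm)
  obtain ⟨S, hS, ⟨κ, hκ⟩, hSmono⟩ := partial_inverse_resolvent_full_domain_general
    (lt_min one_pos hμ) hmono hlip (toEuclideanCLM (𝕜 := ℝ) (diagonal J)).range
    (LinearIsometryEquiv.piLpCongrLeft 2 ℝ ℝ σ.symm)
    fun v => (inner_toEuclideanCLM_self_eq_zero hH0 v).le
  have hT {w b} : TGraph g J (σ.permMatrix ℝ) H0 w b ↔
      S (WithLp.toLp 2 b) = WithLp.toLp 2 w := by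
    rw [TGraph_permMatrix_iff hJ, ← SetRel.mem_inv, hS]
    rfl
  refine ⟨fun b => ⟨(S (WithLp.toLp 2 b)).ofLp, hT.mpr rfl⟩,
    fun b w₁ w₂ h₁ h₂ => WithLp.toLp_injective 2 ((hT.mp h₁).symm.trans (hT.mp h₂)),
    ⟨κ, κ.2, fun w₁ b₁ w₂ b₂ h₁ h₂ => ?_⟩, fun w₁ b₁ w₂ b₂ h₁ h₂ => ?_⟩
  · rw [← norm_toLp_sq, ← norm_toLp_sq, ← mul_pow, WithLp.toLp_sub, WithLp.toLp_sub,
      ← hT.mp h₁, ← hT.mp h₂]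
    exact pow_le_pow_left₀ (norm_nonneg _) (hκ.norm_sub_le _ _) 2
  · rw [← inner_toLp_eq_dotProduct, WithLp.toLp_sub, WithLp.toLp_sub, ← hT.mp h₁, ← hT.mp h₂]
    exact hSmono _ _
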